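/- Let H be a real Hilbert space, d ≥ 1 an integer, C ⊆ H a nonempty closed convex set with ‖x − y‖ ≤ d for all x, y ∈ C, T : C → C nonexpansive with Fix(T) ≠ ∅, and G : C → C a τ-contraction (0 ≤ τ < 1). Let (λ_n) ⊆ (0,1], h : ℕ → ℕ⁺ with λ_n ≥ 1/h(n) for all n, χ : ℕ → ℕ with λ_i ≤ 1/(n+1) for all n ∈ ℕ and all i ≥ χ(n), φ₁ : (0,∞) → ℕ with Σ_{i=1}^{φ₁(x)} λ_i ≥ x for all real x > 0, and φ₂ : (0,∞) → ℕ with |λ_n − λ_{n+1}|/λ_{n+1}² ≤ δ for all δ > 0 and all n ≥ φ₂(δ). Let u₀ ∈ C and u_{n+1} := (1−λ_{n+1})·T(u_n) + λ_{n+1}·G(T(u_n)). Then for every ε ∈ (0,1], every g : ℕ → ℕ and every x ∈ C there exists n ≤ Ξ(δ₀/6, g_c, χ, h, d, τ) + c, where δ₀ := ε/(2d(2+τ)), c := φ₁((φ₂((1−τ)²δ₀/(6d)) + ln(6d/δ₀))/(1−τ)) and g_c(m) := m + c + g(m + c), such that: (i) ‖u_i − u_j‖ ≤ ε for all i, j ∈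 [n; n + g(n)]; and (ii) if ‖T(x) − x‖ ≤ 1/K, where K := k_{i₀} is the quantity occurring in the definition of Ξ(δ₀/6, g_c, χ, h, d, τ), then ⟨G(u_n) − u_n, x − u_n⟩ ≤ ε. -/

import Mathlib

open scoped RealInnerProductSpace

/-- `fM f n = max {f i : 1 ≤ i ≤ n}`. -/
def fM (f : ℕ → ℕ) (n : ℕ) : ℕ := (Finset.Icc 1 n).sup f

/-- `ftilde d f n = max {fᴹ(16·d·n²), 16·d·n²}`. -/
def ftilde (d : ℕ) (f : ℕ → ℕ) (n : ℕ) : ℕ := max (fM f (16 * d * n ^ 2)) (16 * d * n ^ 2)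

/-- `fIt d nε f i = f̃^(nε^i)`, the `nε^i`-fold iterate of `f̃`. -/
def fIt (d nε : ℕ) (f : ℕ → ℕ) (i : ℕ) (k : ℕ) : ℕ := (ftilde d f)^[nε ^ i] k

/-- `ftildeI d nε f i n = max {fᵢᴹ(16·d·n²), 16·d·n²}`. -/
def ftildeI (d nε : ℕ) (f : ℕ → ℕ) (i : ℕ) (n : ℕ) : ℕ :=
  max (fM (fIt d nε f i) (16 * d * n ^ 2)) (16 * d * n ^ 2)

/-- The recursively defined sequence `k₀ := f̃₀^(nε)(1)`, `k_{i+1} := f̃ᵢ^(nε)(kᵢ)`. -/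
def kSeq (d nε : ℕ) (f : ℕ → ℕ) : ℕ → ℕ
  | 0 => (ftildeI d nε f 0)^[nε] 1
  | (i + 1) => (ftildeI d nε f i)^[nε] (kSeq d nε f i)

/-- `Kdef d τ ε̃ f = k_{i₀}` where `n_ε̃ := ⌈8d⁴/ε̃⁴⌉` and `i₀` is the least `i`
with `τ^(i+1) ≤ ε̃/(6d²)`. -/
noncomputable def Kdef (d : ℕ) (τ εt : ℝ) (f : ℕ → ℕ) : ℕ :=
  kSeq d ⌈8 * (d : ℝ) ^ 4 / εt ^ 4⌉₊ f
    (sInf {i : ℕ | τ ^ (i + 1) ≤ εt / (6 * (d : ℝ) ^ 2)})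

/-- `fM0 F n = max {F i : 0 ≤ i ≤ n}` (for functions on ℕ). -/
def fM0 (F : ℕ → ℕ) (n : ℕ) : ℕ := (Finset.range (n + 1)).sup F

/-- `gTil g n = max {n, g n}`. -/
def gTil (g : ℕ → ℕ) (n : ℕ) : ℕ := max n (g n)

/-- The counterfunction majorant `f(n) := ⌈6d·hᴹ(g̃ᴹ(χ(d·n)))/((1−τ)(ε/2)²)⌉`. -/
noncomputable def fXi (ε τ : ℝ) (g χ h : ℕ → ℕ) (d : ℕ) (n : ℕ) : ℕ :=
  ⌈6 * (d : ℝ) * (fM0 h (fM0 (gTil g) (χ (d * n))) : ℝ) / ((1 - τ) * (ε / 2) ^ 2)⌉₊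

/-- The quantity `K = k_{i₀}` occurring in the definition of `Ξ(ε, g, χ, h, d, τ)`,
with `ε₁ := (1−τ)(ε/2)²/2`, `ε_d := ε₁²/(2d²)` and `ε̃ := ((1−τ)²/(6+8d))·ε_d`. -/
noncomputable def KXi (ε : ℝ) (g χ h : ℕ → ℕ) (d : ℕ) (τ : ℝ) : ℕ :=
  Kdef d τ ((1 - τ) ^ 2 / (6 + 8 * (d : ℝ)) *
    (((1 - τ) * (ε / 2) ^ 2 / 2) ^ 2 / (2 * (d : ℝ) ^ 2))) (fXi ε τ g χ h d)

/-- The rate of metastability `Ξ(ε, g, χ, h, d, τ) := χ(d·k_{i₀})`. -/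
noncomputable def XiDef (ε : ℝ) (g χ h : ℕ → ℕ) (d : ℕ) (τ : ℝ) : ℕ :=
  χ (d * KXi ε g χ h d τ)

/-- The shift `c := φ₁((φ₂((1−τ)²δ/(6d)) + ln(6d/δ))/(1−τ))`. -/
noncomputable def cDef (τ : ℝ) (d : ℕ) (φ₁ φ₂ : ℝ → ℕ) (δ : ℝ) : ℕ :=
  φ₁ ((↑(φ₂ ((1 - τ) ^ 2 * δ / (6 * (d : ℝ)))) + Real.log (6 * (d : ℝ) / δ)) / (1 - τ))

/-- The shifted counterfunction `g_c(m) := m + c + g(m + c)`. -/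
def gcDef (g : ℕ → ℕ) (c : ℕ) (m : ℕ) : ℕ := m + c + g (m + c)

theorem aux_fix {H : Type*} [NormedAddCommGroup H] [InnerProductSpace ℝ H] [CompleteSpace H]
    (C : Set H) (hne : C.Nonempty) (hcl : IsClosed C) (A : H → H) (hA : Set.MapsTo A C C)
    (κ : ℝ) (hκ0 : 0 ≤ κ) (hκ : κ < 1)
    (hL : ∀ x ∈ C, ∀ y ∈ C, ‖A x - A y‖ ≤ κ * ‖x - y‖) : ∃ z ∈ C, z = A z := by
  obtain ⟨p, hp⟩ := hne
  have hc : IsComplete C := hcl.isComplete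
  have hcon : ContractingWith ⟨κ, hκ0⟩ (hA.restrict A C C) := by
    refine ⟨by exact_mod_cast hκ, ?_⟩
    refine LipschitzWith.of_dist_le_mul ?_
    rintro ⟨x, hx⟩ ⟨y, hy⟩
    have := hL x hx y hy
    simp only [Subtype.dist_eq, dist_eq_norm]
    exact this
  obtain ⟨z, hz, hfz, -⟩ := ContractingWith.exists_fixedPoint' hc hA hcon hp (edist_ne_top _ _)
  exact ⟨z, hz, hfz.eq.symm⟩

theorem aux_energy {H : Type*} [NormedAddCommGroup H] [InnerProductSpace ℝ H]
    (u x y Tx Ty : H) (t s : ℝ) (hs : 0 < s) (hst : s ≤ t) (ht : t ≤ 1)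
    (hx : x = (1 - t) • Tx + t • u) (hy : y = (1 - s) • Ty + s • u)
    (hT : ‖Tx - Ty‖ ≤ ‖x - y‖) :
    ‖x - y‖ ^ 2 ≤ ‖u - y‖ ^ 2 - ‖u - x‖ ^ 2 := by
  rcases eq_or_lt_of_le ht with h1 | h1
  · subst h1
    have : x = u := by rw [hx]; simp
    rw [this]; simp
  have hmono : 0 ≤ ⟪(x - Tx) - (y - Ty), x - y⟫ := by
    have e : (x - Tx) - (y - Ty) = (x - y) - (Tx - Ty) := by abel
    rw [e, inner_sub_left, real_inner_self_eq_norm_sq]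
    have := real_inner_le_norm (Tx - Ty) (x - y)
    nlinarith [norm_nonneg (x - y)]
  have hxT : (1 - t) • (x - Tx) = t • (u - x) := by
    have : (1 - t) • Tx = x - t • u := by rw [eq_sub_iff_add_eq]; exact hx.symm
    rw [smul_sub, this, sub_smul, smul_sub, one_smul]; abel
  have hyT : (1 - s) • (y - Ty) = s • (u - y) := by
    have : (1 - s) • Ty = y - s • u := by rw [eq_sub_iff_add_eq]; exact hy.symm
    rw [smul_sub, this, sub_smul, smul_sub, one_smul]; abel
  have h2 : (1 - t) * ⟪x - Tx, x - y⟫ = t * ⟪u - x, x - y⟫ := by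
    rw [← real_inner_smul_left, hxT, real_inner_smul_left]
  have h3 : (1 - s) * ⟪y - Ty, x - y⟫ = s * ⟪u - y, x - y⟫ := by
    rw [← real_inner_smul_left, hyT, real_inner_smul_left]
  have h4 : ⟪u - y, x - y⟫ = ⟪u - x, x - y⟫ + ‖x - y‖ ^ 2 := by
    rw [← real_inner_self_eq_norm_sq, ← inner_add_left]; congr 1; abel
  have h5 : ‖u - y‖ ^ 2 = ‖u - x‖ ^ 2 + 2 * ⟪u - x, x - y⟫ + ‖x - y‖ ^ 2 := by
    rw [← norm_add_sq_real]; congr 2; abel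
  rw [inner_sub_left] at hmono
  set a := ⟪u - x, x - y⟫
  set b := ‖x - y‖ ^ 2 with hb
  have hb0 : 0 ≤ b := by positivity
  have h6 : 0 ≤ (1 - s) * t * a - (1 - t) * s * (a + b) := by
    have : 0 ≤ (1 - s) * (1 - t) * (⟪x - Tx, x - y⟫ - ⟪y - Ty, x - y⟫) :=
      mul_nonneg (mul_nonneg (by linarith) (by linarith)) hmono
    rw [h4] at h3
    calc _ ≤ _ := this
      _ = (1 - s) * ((1 - t) * ⟪x - Tx, x - y⟫) - (1 - t) * ((1 - s) * ⟪y - Ty, x - y⟫) := by ring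
      _ = _ := by rw [h2, h3]; ring
  have h7 : (1 - t) * s * b ≤ (t - s) * a := by nlinarith
  have h8 : 0 ≤ (1 - t) * s * b := mul_nonneg (mul_nonneg (by linarith) hs.le) hb0
  rcases eq_or_lt_of_le hst with h9 | h9
  · have hpos : 0 < (1 - t) * s := mul_pos (by linarith) hs
    have hb1 : b ≤ 0 := by
      by_contra hcon
      push Not at hcon
      have := mul_pos hpos hcon
      rw [h9] at h7
      simp at h7
      rw [h9] at this
      linarith
    have hxy : ‖x - y‖ = 0 := by
      have : ‖x - y‖ ^ 2 = 0 := le_antisymm hb1 hb0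
      simpa using this
    have ha : a = 0 := by
      have h10 : x - y = 0 := norm_eq_zero.mp hxy
      simp only [a, h10, inner_zero_right]
    rw [h5, ha]; linarith
  · have ha : 0 ≤ a := by
      by_contra hcon
      push Not at hcon
      nlinarith
    linarith

theorem aux_pigeon (M : ℕ) (E : ℕ → ℝ) (B : ℝ) (hM : 0 < M) (h0 : 0 ≤ E 0) (hE : E M ≤ B) :
    ∃ q < M, E (q + 1) - E q ≤ B / M := by
  by_contra hcon
  push Not at hcon
  have h1 : ∑ q ∈ Finset.range M, (B / M) < ∑ q ∈ Finset.range M, (E (q + 1) - E q) :=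
    Finset.sum_lt_sum_of_nonempty (by simpa using hM.ne') (fun q hq => hcon q (by simpa using hq))
  rw [Finset.sum_range_sub] at h1
  have hM' : (M : ℝ) ≠ 0 := by exact_mod_cast hM.ne'
  simp [mul_div_cancel₀ _ hM'] at h1
  linarith

theorem aux_levels {H : Type*} [NormedAddCommGroup H] [InnerProductSpace ℝ H] [CompleteSpace H]
    (D : ℝ) (C : Set H) (hne : C.Nonempty) (hcl : IsClosed C) (hcv : Convex ℝ C)
    (hbd : ∀ x ∈ C, ∀ y ∈ C, ‖x - y‖ ≤ D)
    (T : H → H) (hTm : Set.MapsTo T C C)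
    (hT : ∀ x ∈ C, ∀ y ∈ C, ‖T x - T y‖ ≤ ‖x - y‖)
    (τ : ℝ) (hτ0 : 0 ≤ τ) (hτ1 : τ < 1)
    (G : H → H) (hGm : Set.MapsTo G C C)
    (hG : ∀ x ∈ C, ∀ y ∈ C, ‖G x - G y‖ ≤ τ * ‖x - y‖)
    (V : ℝ → H) (hVC : ∀ t, 0 < t → t ≤ 1 → V t ∈ C)
    (hV : ∀ t, 0 < t → t ≤ 1 → V t = (1 - t) • T (V t) + t • G (T (V t)))
    (e : ℕ → ℝ) (he : Monotone e) (he1 : ∀ n, 1 ≤ e n)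
    (M : ℕ) (hM : 0 < M) (q : ℝ) (hq : 0 ≤ q) (hqM : D ^ 2 / M ≤ ((1 - τ) * q) ^ 2) (j : ℕ) :
    ∀ L : ℕ, ∃ s, 1 ≤ s ∧ s + L ≤ 1 + M ^ j * L ∧ ∃ c ∈ C, ∀ t, 1 / e (s + L) ≤ t → t ≤ 1 / e s →
      ‖V t - c‖ ≤ τ ^ j * D + q := by
  have hep : ∀ n, 0 < e n := fun n => lt_of_lt_of_le one_pos (he1 n)
  have hinv : ∀ n, 0 < 1 / e n ∧ 1 / e n ≤ 1 := fun n =>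
    ⟨by have := hep n; positivity, by rw [div_le_one (hep n)]; exact he1 n⟩
  induction j with
  | zero =>
    intro L
    obtain ⟨p, hp⟩ := hne
    refine ⟨1, le_rfl, by simp, p, hp, fun t h1 h2 => ?_⟩
    have := hbd _ (hVC t ((hinv _).1.trans_le h1) (h2.trans (hinv _).2)) p hp
    simp; linarith
  | succ j ih =>
    intro L
    obtain ⟨s, hs1, hsL, c, hc, hVc⟩ := ih (M * L)
    set a := G (T c) with ha
    have haC : a ∈ C := hGm (hTm hc)
    have hz : ∀ t : ℝ, ∃ z, 0 < t → t ≤ 1 → z ∈ C ∧ z = (1 - t) • T z + t • a := by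
      intro t
      by_cases ht : 0 < t ∧ t ≤ 1
      · obtain ⟨z, hz, hz'⟩ := aux_fix C hne hcl (fun z => (1 - t) • T z + t • a)
          (fun z hz => hcv (hTm hz) haC (by linarith [ht.2]) ht.1.le (by ring)) (1 - t)
          (by linarith [ht.2]) (by linarith [ht.1]) (fun x hx y hy => by
            have e1 : ((1 - t) • T x + t • a) - ((1 - t) • T y + t • a) = (1 - t) • (T x - T y) := by
              rw [smul_sub]; abel
            simp only [e1]
            rw [norm_smul, Real.norm_of_nonneg (by linarith [ht.2])]
            exact mul_le_mul_of_nonneg_left (hT x hx y hy) (by linarith [ht.2]))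
        exact ⟨z, fun _ _ => ⟨hz, hz'⟩⟩
      · exact ⟨0, fun h1 h2 => absurd ⟨h1, h2⟩ ht⟩
    choose Z hZ using hz
    have hE : ∀ s t, 0 < s → s ≤ t → t ≤ 1 →
        ‖Z t - Z s‖ ^ 2 ≤ ‖a - Z s‖ ^ 2 - ‖a - Z t‖ ^ 2 := by
      intro s t hs hst ht
      exact aux_energy a (Z t) (Z s) (T (Z t)) (T (Z s)) t s hs hst ht
        (hZ t (hs.trans_le hst) ht).2 (hZ s hs (hst.trans ht)).2
        (hT _ (hZ t (hs.trans_le hst) ht).1 _ (hZ s hs (hst.trans ht)).1)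
    obtain ⟨i, hiM, hi⟩ := aux_pigeon M (fun i => ‖a - Z (1 / e (s + i * L))‖ ^ 2) (D ^ 2) hM
      (by positivity) (by
        have := hbd a haC _ (hZ (1 / e (s + M * L)) (hinv _).1 (hinv _).2).1
        gcongr)
    have hiL : i * L + L ≤ M * L := by
      have := Nat.mul_le_mul_right L (Nat.succ_le_of_lt hiM)
      rwa [Nat.succ_mul] at this
    refine ⟨s + i * L, by omega, ?_, Z (1 / e (s + i * L)), (hZ _ (hinv _).1 (hinv _).2).1, ?_⟩
    · have : M ^ (j + 1) * L = M ^ j * (M * L) := by ring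
      rw [this]; omega
    intro t ht1 ht2
    have ht0 : 0 < t := (hinv _).1.trans_le ht1
    have htl : t ≤ 1 := ht2.trans (hinv _).2
    have hb := hVc t (le_trans (one_div_le_one_div_of_le (hep _) (he (by omega))) ht1)
      (le_trans ht2 (one_div_le_one_div_of_le (hep _) (he (by omega))))
    have h1 := hE t _ ht0 ht2 (hinv _).2
    have h2 := hE _ t (hinv (s + i * L + L)).1 ht1 htl
    have h3 : (i + 1) * L = i * L + L := by ring
    simp only [h3, ← add_assoc] at hi
    have h4 : ‖Z (1 / e (s + i * L)) - Z t‖ ^ 2 ≤ ((1 - τ) * q) ^ 2 := by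
      nlinarith [sq_nonneg ‖Z t - Z (1 / e (s + i * L + L))‖]
    have h5 : ‖Z t - Z (1 / e (s + i * L))‖ ≤ (1 - τ) * q := by
      rw [norm_sub_rev]
      exact abs_le_of_sq_le_sq' h4 (mul_nonneg (by linarith) hq) |>.2
    have hVt := hVC t ht0 htl
    obtain ⟨hZt, hZe⟩ := hZ t ht0 htl
    have h6 : ‖V t - Z t‖ ≤ τ * ‖V t - c‖ := by
      have e1 : V t - Z t = (1 - t) • (T (V t) - T (Z t)) + t • (G (T (V t)) - a) := by
        conv_lhs => rw [hV t ht0 htl, hZe]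
        simp only [smul_sub]; abel
      have n1 : ‖V t - Z t‖ ≤ (1 - t) * ‖V t - Z t‖ + t * (τ * ‖V t - c‖) := by
        calc ‖V t - Z t‖ = _ := congrArg norm e1
          _ ≤ _ := norm_add_le _ _
          _ = (1 - t) * ‖T (V t) - T (Z t)‖ + t * ‖G (T (V t)) - a‖ := by
            rw [norm_smul, norm_smul, Real.norm_of_nonneg (by linarith), Real.norm_of_nonneg ht0.le]
          _ ≤ _ := by
            have m1 := hT _ hVt _ hZt
            have m2 := hG _ (hTm hVt) _ (hTm hc)
            have m3 := hT _ hVt _ hc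
            have m4 : ‖G (T (V t)) - a‖ ≤ τ * ‖V t - c‖ :=
              m2.trans (mul_le_mul_of_nonneg_left m3 hτ0)
            have := sub_nonneg.2 htl
            gcongr
      nlinarith
    calc ‖V t - Z (1 / e (s + i * L))‖ = ‖(V t - Z t) + (Z t - Z (1 / e (s + i * L)))‖ := by
          congr 1; abel
      _ ≤ _ := norm_add_le _ _
      _ ≤ τ * (τ ^ j * D + q) + (1 - τ) * q :=
        add_le_add (h6.trans (mul_le_mul_of_nonneg_left hb hτ0)) h5
      _ = _ := by ring

theorem aux_fM_le (f : ℕ → ℕ) (n m : ℕ) (h1 : 1 ≤ m) (h2 : m ≤ n) : f m ≤ fM f n :=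
  Finset.le_sup (f := f) (Finset.mem_Icc.2 ⟨h1, h2⟩)

theorem aux_fM_mono (f : ℕ → ℕ) : Monotone (fM f) := fun _ _ h =>
  Finset.sup_mono (Finset.Icc_subset_Icc le_rfl h)

theorem aux_sq_le (d : ℕ) (hd : 1 ≤ d) (n : ℕ) : n ≤ 16 * d * n ^ 2 := by
  rcases Nat.eq_zero_or_pos n with h | h
  · simp [h]
  · nlinarith [Nat.mul_le_mul hd h, Nat.mul_le_mul (Nat.mul_le_mul hd h) h]

theorem aux_ftilde_mono (d : ℕ) (f : ℕ → ℕ) : Monotone (ftilde d f) := by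
  intro a b hab
  have h : 16 * d * a ^ 2 ≤ 16 * d * b ^ 2 := by gcongr
  exact max_le_max (aux_fM_mono f h) h

theorem aux_le_ftilde (d : ℕ) (hd : 1 ≤ d) (f : ℕ → ℕ) (n : ℕ) : n ≤ ftilde d f n :=
  (aux_sq_le d hd n).trans (le_max_right _ _)

theorem aux_f_le_ftilde (d : ℕ) (hd : 1 ≤ d) (f : ℕ → ℕ) (n : ℕ) (hn : 1 ≤ n) :
    f n ≤ ftilde d f n :=
  (aux_fM_le f _ n hn (aux_sq_le d hd n)).trans (le_max_left _ _)

theorem aux_iter_mono (d : ℕ) (hd : 1 ≤ d) (f : ℕ → ℕ) (k : ℕ) :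
    Monotone (fun n => (ftilde d f)^[n] k) := by
  refine monotone_nat_of_le_succ fun n => ?_
  simp only [Function.iterate_succ_apply']
  exact aux_le_ftilde d hd f _

theorem aux_step (d N : ℕ) (hd : 1 ≤ d) (f : ℕ → ℕ) (i : ℕ) (m k : ℕ) (hk : 1 ≤ k) :
    (ftilde d f)^[N ^ i * m] k ≤ (ftildeI d N f i)^[m] k := by
  induction m with
  | zero => simp
  | succ m ih =>
    rw [Function.iterate_succ_apply', Nat.mul_succ, add_comm, Function.iterate_add_apply]
    have h1 : 1 ≤ (ftilde d f)^[N ^ i * m] k :=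
      hk.trans (aux_iter_mono d hd f k (Nat.zero_le _))
    refine ((aux_ftilde_mono d f).iterate _ ih).trans ?_
    exact (aux_fM_le (fIt d N f i) _ _ (h1.trans ih) (aux_sq_le d hd _)).trans (le_max_left _ _)

theorem aux_kSeq (d N : ℕ) (hd : 1 ≤ d) (f : ℕ → ℕ) (i : ℕ) :
    1 ≤ kSeq d N f i ∧ (ftilde d f)^[N ^ (max i 1)] 1 ≤ kSeq d N f i := by
  have h1 : ∀ n, 1 ≤ (ftilde d f)^[n] 1 := fun n => aux_iter_mono d hd f 1 (Nat.zero_le n)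
  induction i with
  | zero =>
    have := aux_step d N hd f 0 N 1 le_rfl
    have h2 : (ftilde d f)^[N ^ (max 0 1)] 1 ≤ kSeq d N f 0 := by simpa [kSeq] using this
    exact ⟨(h1 _).trans h2, h2⟩
  | succ i ih =>
    have := aux_step d N hd f i N (kSeq d N f i) ih.1
    have h2 : (ftilde d f)^[N ^ (max (i+1) 1)] 1 ≤ kSeq d N f (i+1) := by
      rw [max_eq_left (by omega), pow_succ]
      exact ((aux_ftilde_mono d f).iterate _ ih.1).trans this
    exact ⟨(h1 _).trans h2, h2⟩

/-- numerics -/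
theorem aux_num (d : ℕ) (hd : 1 ≤ d) (τ : ℝ) (hτ0 : 0 ≤ τ) (hτ1 : τ < 1) (ε e εt : ℝ)
    (hε : 0 < ε) (hε1 : ε ≤ 1) (he : 0 < e) (he' : e ≤ ε / 24)
    (hεt : εt = (1 - τ) ^ 2 / (6 + 8 * (d : ℝ)) *
      (((1 - τ) * (e / 2) ^ 2 / 2) ^ 2 / (2 * (d : ℝ) ^ 2))) :
    0 < εt ∧ εt ≤ (1 - τ) * ε / 8 ∧ εt ≤ (ε / 8) ^ 2 := by
  have hd' : (1 : ℝ) ≤ d := by exact_mod_cast hd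
  have hτ : 0 < 1 - τ := by linarith
  have hτ' : 1 - τ ≤ 1 := by linarith
  have h0 : 0 < εt := by rw [hεt]; positivity
  have he1 : e ≤ 1 := by linarith
  have hX : (1 - τ) ^ 2 / (6 + 8 * (d : ℝ)) ≤ 1 - τ := by
    rw [div_le_iff₀ (by positivity)]; nlinarith
  have hY : ((1 - τ) * (e / 2) ^ 2 / 2) ^ 2 / (2 * (d : ℝ) ^ 2) ≤ e ^ 2 := by
    rw [div_le_iff₀ (by positivity)]
    have a1 : (1 - τ) * (e / 2) ^ 2 / 2 ≤ e := by nlinarith [sq_nonneg e]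
    have a2 : ((1 - τ) * (e / 2) ^ 2 / 2) ^ 2 ≤ e ^ 2 := by gcongr
    have a3 : (1 : ℝ) ≤ 2 * (d : ℝ) ^ 2 := by nlinarith
    exact a2.trans (le_mul_of_one_le_right (sq_nonneg e) a3)
  have hm : εt ≤ (1 - τ) * e ^ 2 := by
    rw [hεt]; exact mul_le_mul hX hY (by positivity) hτ.le
  have he2 : e ^ 2 ≤ (ε / 24) ^ 2 := by gcongr
  refine ⟨h0, ?_, ?_⟩
  · have : e ^ 2 ≤ ε / 8 := by nlinarith
    calc εt ≤ _ := hm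
      _ ≤ (1 - τ) * (ε / 8) := by gcongr
      _ = _ := by ring
  · nlinarith [sq_nonneg e]

theorem aux_num2 (d : ℕ) (hd : 1 ≤ d) (τ : ℝ) (hτ1 : τ < 1) (ε εt : ℝ) (hτ0 : 0 ≤ τ)
    (hε : 0 < ε) (hε1 : ε ≤ 1) (h0 : 0 < εt) (h1 : εt ≤ (1 - τ) * ε / 8) :
    2 ≤ ⌈8 * (d : ℝ) ^ 4 / εt ^ 4⌉₊ ∧
    (d : ℝ) ^ 2 / ((⌈8 * (d : ℝ) ^ 4 / εt ^ 4⌉₊ - 1 : ℕ) : ℝ) ≤ ((1 - τ) * (ε / 8)) ^ 2 := by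
  have hd' : (1 : ℝ) ≤ d := by exact_mod_cast hd
  have hle := Nat.le_ceil (8 * (d : ℝ) ^ 4 / εt ^ 4)
  set N := ⌈8 * (d : ℝ) ^ 4 / εt ^ 4⌉₊
  have ht1 : εt ≤ 1 := by nlinarith
  have hd2 : (1 : ℝ) ≤ (d : ℝ) ^ 2 := one_le_pow₀ hd'
  have ht2 : εt ^ 2 ≤ 1 := pow_le_one₀ h0.le ht1
  have hA : 8 * ((d : ℝ) ^ 2 / εt ^ 2) ≤ 8 * (d : ℝ) ^ 4 / εt ^ 4 := by
    rw [mul_div_assoc]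
    have : (d : ℝ) ^ 2 / εt ^ 2 ≤ (d : ℝ) ^ 4 / εt ^ 4 := by
      apply div_le_div₀ (by positivity) (by nlinarith) (by positivity)
      nlinarith [sq_nonneg εt]
    linarith
  have hB : 1 ≤ (d : ℝ) ^ 2 / εt ^ 2 := by
    rw [one_le_div (by positivity)]; linarith
  have hN8 : (8 : ℝ) ≤ N := by linarith
  have hN : 8 ≤ N := by exact_mod_cast hN8
  refine ⟨by omega, ?_⟩
  rw [Nat.cast_sub (by omega)]
  push_cast
  rw [div_le_iff₀ (by linarith)]
  have hC : (d : ℝ) ^ 2 / εt ^ 2 ≤ N - 1 := by linarith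
  rw [div_le_iff₀ (by positivity)] at hC
  have hD : εt ^ 2 ≤ ((1 - τ) * (ε / 8)) ^ 2 := by
    apply pow_le_pow_left₀ h0.le; linarith
  nlinarith

/-- the iteration tracks the implicit path -/
theorem aux_track (D : ℝ) (hD : 0 < D) (τ : ℝ) (hτ0 : 0 ≤ τ) (hτ1 : τ < 1)
    (lam : ℕ → ℝ) (hlam : ∀ n, lam n ∈ Set.Ioc (0 : ℝ) 1)
    (a : ℕ → ℝ) (ha0 : ∀ n, 0 ≤ a n) (haD : ∀ n, a n ≤ D) (P : ℕ) (κ : ℝ) (hκ : 0 < κ)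
    (hκD : κ ≤ D)
    (hstep : ∀ n ≥ P, a (n + 1) ≤ (1 - lam (n + 1) * (1 - τ)) * a n + lam (n + 1) * (1 - τ) * κ)
    (c : ℕ) (hc : (P + Real.log (D / κ)) / (1 - τ) ≤ ∑ i ∈ Finset.Icc 1 c, lam i) (n : ℕ)
    (hn : c ≤ n) : a n ≤ 2 * κ := by
  have hτ : 0 < 1 - τ := by linarith
  have hlog : 0 ≤ Real.log (D / κ) := Real.log_nonneg (by rwa [one_le_div hκ])
  have key : ∀ m, a (P + m) ≤ κ + D * Real.exp (-(1 - τ) * ∑ i ∈ Finset.Icc (P + 1) (P + m), lam i) := by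
    intro m
    induction m with
    | zero => simp; linarith [haD P]
    | succ m ih =>
      have h1 := hstep (P + m) (by omega)
      have h2 := hlam (P + m + 1)
      rw [← add_assoc, Finset.sum_Icc_succ_top (by omega), mul_add, Real.exp_add]
      set E := Real.exp (-(1 - τ) * ∑ i ∈ Finset.Icc (P + 1) (P + m), lam i)
      have hE : 0 < E := Real.exp_pos _
      have h3 := Real.add_one_le_exp (-(1 - τ) * lam (P + m + 1))
      have h4 : 0 ≤ 1 - lam (P + m + 1) * (1 - τ) := by nlinarith [h2.1, h2.2]
      have h5 := mul_le_mul_of_nonneg_left ih h4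
      have h6 := mul_le_mul_of_nonneg_left h3 (mul_nonneg hD.le hE.le)
      nlinarith
  have hPc : P ≤ c := by
    have h1 : ∑ i ∈ Finset.Icc 1 c, lam i ≤ ∑ i ∈ Finset.Icc 1 c, (1 : ℝ) :=
      Finset.sum_le_sum fun i _ => (hlam i).2
    simp at h1
    rw [div_le_iff₀ hτ] at hc
    have h3 : (0:ℝ) ≤ ∑ i ∈ Finset.Icc 1 c, lam i := Finset.sum_nonneg fun i _ => (hlam i).1.le
    have h2 : (P : ℝ) ≤ c := by nlinarith
    exact_mod_cast h2
  obtain ⟨m, rfl⟩ := Nat.exists_eq_add_of_le (hPc.trans hn)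
  refine (key m).trans ?_
  have hsum : Real.log (D / κ) / (1 - τ) ≤ ∑ i ∈ Finset.Icc (P + 1) (P + m), lam i := by
    have h1 : ∑ i ∈ Finset.Icc 1 c, lam i ≤ ∑ i ∈ Finset.Icc 1 (P + m), lam i :=
      Finset.sum_le_sum_of_subset_of_nonneg (Finset.Icc_subset_Icc le_rfl hn)
        fun i _ _ => (hlam i).1.le
    have h2 : ∑ i ∈ Finset.Icc 1 (P + m), lam i =
        ∑ i ∈ Finset.Icc 1 P, lam i + ∑ i ∈ Finset.Icc (P + 1) (P + m), lam i := by
      rw [← Finset.sum_union]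
      · congr 1; ext i; simp only [Finset.mem_union, Finset.mem_Icc]; omega
      · rw [Finset.disjoint_left]; intro i; simp only [Finset.mem_Icc]; omega
    have h3 : ∑ i ∈ Finset.Icc 1 P, lam i ≤ P := by
      have h1 : ∑ i ∈ Finset.Icc 1 P, lam i ≤ ∑ i ∈ Finset.Icc 1 P, (1 : ℝ) :=
        Finset.sum_le_sum fun i _ => (hlam i).2
      simpa using h1
    have h4 : (P : ℝ) ≤ P / (1 - τ) := by
      rw [le_div_iff₀ hτ]; nlinarith [Nat.cast_nonneg (α := ℝ) P]
    rw [add_div] at hc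
    linarith
  rw [div_le_iff₀ hτ] at hsum
  have : Real.exp (-(1 - τ) * ∑ i ∈ Finset.Icc (P + 1) (P + m), lam i) ≤ κ / D := by
    rw [← Real.exp_log (div_pos hκ hD), Real.exp_le_exp, ← inv_div, Real.log_inv]
    linarith
  have h2 := mul_le_mul_of_nonneg_left this hD.le
  rw [mul_div_cancel₀ _ hD.ne'] at h2
  linarith

theorem aux_vip {H : Type*} [NormedAddCommGroup H] [InnerProductSpace ℝ H]
    (D τ t : ℝ) (hτ1 : τ < 1) (v x Tv Tx Gv GTv : H) (ht : 0 < t)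
    (hv : v = (1 - t) • Tv + t • GTv) (hT : ‖Tx - Tv‖ ≤ ‖x - v‖)
    (hD : 0 ≤ D)
    (h1 : ‖x - v‖ ≤ D) (h2 : ‖GTv - Tv‖ ≤ D) (h3 : ‖Gv - GTv‖ ≤ ‖v - Tv‖) :
    ⟪Gv - v, x - v⟫ ≤ D * ‖Tx - x‖ / t + 2 * t * D * D := by
  have hvT : v - Tv = t • (GTv - Tv) := by
    conv_lhs => rw [hv]
    rw [sub_smul, one_smul, smul_sub]; abel
  have hn : ‖v - Tv‖ ≤ t * D := by
    rw [hvT, norm_smul, Real.norm_of_nonneg ht.le]; gcongr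
  have e1 : ⟪Gv - v, x - v⟫ = ⟪GTv - Tv, x - v⟫ + ⟪Gv - GTv, x - v⟫ + ⟪Tv - v, x - v⟫ := by
    rw [← inner_add_left, ← inner_add_left]; congr 1; abel
  have m1 : ⟪GTv - Tv, x - v⟫ ≤ D * ‖Tx - x‖ / t := by
    rw [le_div_iff₀ ht]
    have e2 : ⟪GTv - Tv, x - v⟫ * t = ⟪v - Tv, x - v⟫ := by
      rw [hvT, real_inner_smul_left]; ring
    have e3 : ⟪v - Tv, x - v⟫ = ⟪Tx - Tv, x - v⟫ - ‖x - v‖ ^ 2 + ⟪x - Tx, x - v⟫ := by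
      rw [← real_inner_self_eq_norm_sq, ← inner_sub_left, ← inner_add_left]; congr 1; abel
    have i1 := real_inner_le_norm (Tx - Tv) (x - v)
    have i2 := real_inner_le_norm (x - Tx) (x - v)
    rw [norm_sub_rev x Tx] at i2
    rw [e2, e3]
    nlinarith [norm_nonneg (x - v), norm_nonneg (Tx - x)]
  have m2 : ⟪Gv - GTv, x - v⟫ ≤ t * D * D :=
    (real_inner_le_norm _ _).trans (mul_le_mul (h3.trans hn) h1 (norm_nonneg _) (by positivity))
  have m3 : ⟪Tv - v, x - v⟫ ≤ t * D * D :=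
    (real_inner_le_norm _ _).trans (mul_le_mul (by rwa [norm_sub_rev]) h1 (norm_nonneg _) (by positivity))
  rw [e1]; linarith

theorem aux_vip_diff {H : Type*} [NormedAddCommGroup H] [InnerProductSpace ℝ H]
    (D τ r : ℝ) (hτ : 0 ≤ τ) (u v x Gu Gv : H) (hr : ‖u - v‖ ≤ r) (hG : ‖Gu - Gv‖ ≤ τ * ‖u - v‖)
    (hD : 0 ≤ D) (h1 : ‖x - u‖ ≤ D) (h2 : ‖Gv - v‖ ≤ D) :
    ⟪Gu - u, x - u⟫ ≤ ⟪Gv - v, x - v⟫ + (2 + τ) * D * r := by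
  have hr0 : 0 ≤ r := (norm_nonneg _).trans hr
  have e : ⟪Gu - u, x - u⟫ = ⟪Gv - v, x - v⟫ + ⟪Gu - Gv, x - u⟫ + ⟪v - u, x - u⟫ + ⟪Gv - v, v - u⟫ := by
    simp only [inner_sub_left, inner_sub_right]; ring
  have hvu : ‖v - u‖ ≤ r := by rwa [norm_sub_rev]
  have m1 : ⟪Gu - Gv, x - u⟫ ≤ (τ * r) * D :=
    (real_inner_le_norm _ _).trans (mul_le_mul (hG.trans (by gcongr)) h1 (norm_nonneg _) (by positivity))
  have m2 : ⟪v - u, x - u⟫ ≤ r * D :=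
    (real_inner_le_norm _ _).trans (mul_le_mul hvu h1 (norm_nonneg _) (by positivity))
  have m3 : ⟪Gv - v, v - u⟫ ≤ D * r :=
    (real_inner_le_norm _ _).trans (mul_le_mul h2 hvu (norm_nonneg _) (by positivity))
  rw [e]; linarith

theorem aux_fM0_le (F : ℕ → ℕ) (n m : ℕ) (h : m ≤ n) : F m ≤ fM0 F n :=
  Finset.le_sup (f := F) (Finset.mem_range.2 (by omega))

set_option maxHeartbeats 2000000

/-- Full quantitative version of Yamada's theorem for a single nonexpansive mapping:
rate of metastability for the iteration together with the finitary variational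
inequality for approximate fixed points. -/
theorem hsdm_single_metastable_with_vip
    {H : Type*} [NormedAddCommGroup H] [InnerProductSpace ℝ H] [CompleteSpace H]
    (d : ℕ) (hd : 1 ≤ d)
    (C : Set H) (hne : C.Nonempty) (hcl : IsClosed C) (hcv : Convex ℝ C)
    (hbd : ∀ x ∈ C, ∀ y ∈ C, ‖x - y‖ ≤ (d : ℝ))
    (T : H → H) (hTm : Set.MapsTo T C C)
    (hT : ∀ x ∈ C, ∀ y ∈ C, ‖T x - T y‖ ≤ ‖x - y‖)
    (hfix : ∃ p ∈ C, T p = p)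
    (τ : ℝ) (hτ0 : 0 ≤ τ) (hτ1 : τ < 1)
    (G : H → H) (hGm : Set.MapsTo G C C)
    (hG : ∀ x ∈ C, ∀ y ∈ C, ‖G x - G y‖ ≤ τ * ‖x - y‖)
    (lam : ℕ → ℝ) (hlam : ∀ n, lam n ∈ Set.Ioc (0 : ℝ) 1)
    (h : ℕ → ℕ) (hh : ∀ n, 1 ≤ h n) (hlamh : ∀ n, 1 / (h n : ℝ) ≤ lam n)
    (χ : ℕ → ℕ) (hχ : ∀ n : ℕ, ∀ i ≥ χ n, lam i ≤ 1 / ((n : ℝ) + 1))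
    (φ₁ : ℝ → ℕ) (hφ₁ : ∀ x : ℝ, 0 < x → x ≤ ∑ i ∈ Finset.Icc 1 (φ₁ x), lam i)
    (φ₂ : ℝ → ℕ)
    (hφ₂ : ∀ δ : ℝ, 0 < δ → ∀ n ≥ φ₂ δ, |lam n - lam (n + 1)| / (lam (n + 1)) ^ 2 ≤ δ)
    (u : ℕ → H) (hu0 : u 0 ∈ C)
    (hrec : ∀ n, u (n + 1) = (1 - lam (n + 1)) • T (u n) + lam (n + 1) • G (T (u n)))
    (ε : ℝ) (hε : ε ∈ Set.Ioc (0 : ℝ) 1) (g : ℕ → ℕ) (x : H) (hx : x ∈ C) :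
    ∃ n ≤ XiDef (ε / (2 * (d : ℝ) * (2 + τ)) / 6)
        (gcDef g (cDef τ d φ₁ φ₂ (ε / (2 * (d : ℝ) * (2 + τ))))) χ h d τ +
        cDef τ d φ₁ φ₂ (ε / (2 * (d : ℝ) * (2 + τ))),
      (∀ i ∈ Set.Icc n (n + g n), ∀ j ∈ Set.Icc n (n + g n), ‖u i - u j‖ ≤ ε) ∧
      (‖T x - x‖ ≤ 1 / (KXi (ε / (2 * (d : ℝ) * (2 + τ)) / 6)
          (gcDef g (cDef τ d φ₁ φ₂ (ε / (2 * (d : ℝ) * (2 + τ))))) χ h d τ : ℝ) →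
        ⟪G (u n) - u n, x - u n⟫ ≤ ε) := by
  have hd' : (1 : ℝ) ≤ d := by exact_mod_cast hd
  have hτ : 0 < 1 - τ := by linarith
  obtain ⟨hε0, hε1⟩ := hε
  set δ := ε / (2 * (d : ℝ) * (2 + τ)) with hδ
  have hδ0 : 0 < δ := by rw [hδ]; positivity
  have hδε : 2 * (d : ℝ) * (2 + τ) * δ = ε := by rw [hδ]; field_simp
  have hδ4 : δ ≤ ε / 4 := by
    nlinarith [mul_nonneg (sub_nonneg.2 hd') hδ0.le,
      mul_nonneg (mul_nonneg (zero_le_one.trans hd') hτ0) hδ0.le]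
  set c := cDef τ d φ₁ φ₂ δ with hc
  set gc := gcDef g c with hgc
  -- implicit path
  have hVex : ∀ t : ℝ, ∃ z, 0 < t → t ≤ 1 → z ∈ C ∧ z = (1 - t) • T z + t • G (T z) := by
    intro t
    by_cases ht : 0 < t ∧ t ≤ 1
    · have h1t : 0 ≤ 1 - t := by linarith [ht.2]
      obtain ⟨z, hz, hz'⟩ := aux_fix C hne hcl (fun z => (1 - t) • T z + t • G (T z))
        (fun z hz => hcv (hTm hz) (hGm (hTm hz)) h1t ht.1.le (by ring)) (1 - t * (1 - τ))
        (by nlinarith [ht.1, ht.2]) (by nlinarith [ht.1]) (fun x hx y hy => by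
          have e1 : ((1 - t) • T x + t • G (T x)) - ((1 - t) • T y + t • G (T y)) =
            (1 - t) • (T x - T y) + t • (G (T x) - G (T y)) := by
            simp only [smul_sub]; abel
          simp only [e1]
          refine (norm_add_le _ _).trans ?_
          rw [norm_smul, norm_smul, Real.norm_of_nonneg h1t, Real.norm_of_nonneg ht.1.le]
          have m1 := mul_le_mul_of_nonneg_left (hT x hx y hy) h1t
          have m2 := mul_le_mul_of_nonneg_left ((hG _ (hTm hx) _ (hTm hy)).trans
            (mul_le_mul_of_nonneg_left (hT x hx y hy) hτ0)) ht.1.le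
          linarith)
      exact ⟨z, fun _ _ => ⟨hz, hz'⟩⟩
    · exact ⟨0, fun h1 h2 => absurd ⟨h1, h2⟩ ht⟩
  choose V hV using hVex
  have huC : ∀ n, u n ∈ C := by
    intro n
    induction n with
    | zero => exact hu0
    | succ n ih =>
      rw [hrec]
      exact hcv (hTm ih) (hGm (hTm ih)) (by linarith [(hlam (n+1)).2]) (hlam (n+1)).1.le (by ring)
  have hvC : ∀ n, V (lam n) ∈ C := fun n => (hV _ (hlam n).1 (hlam n).2).1
  have hve : ∀ n, V (lam n) = (1 - lam n) • T (V (lam n)) + lam n • G (T (V (lam n))) :=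
    fun n => (hV _ (hlam n).1 (hlam n).2).2
  -- contraction estimate
  have hcon : ∀ t, 0 < t → t ≤ 1 → ∀ a ∈ C, ∀ b ∈ C,
      ‖((1 - t) • T a + t • G (T a)) - ((1 - t) • T b + t • G (T b))‖ ≤
        (1 - t * (1 - τ)) * ‖a - b‖ := by
    intro t ht0 ht1 a ha b hb
    have h1t : 0 ≤ 1 - t := by linarith
    have e1 : ((1 - t) • T a + t • G (T a)) - ((1 - t) • T b + t • G (T b)) =
      (1 - t) • (T a - T b) + t • (G (T a) - G (T b)) := by
      simp only [smul_sub]; abel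
    rw [e1]
    refine (norm_add_le _ _).trans ?_
    rw [norm_smul, norm_smul, Real.norm_of_nonneg h1t, Real.norm_of_nonneg ht0.le]
    have m1 := mul_le_mul_of_nonneg_left (hT a ha b hb) h1t
    have m2 := mul_le_mul_of_nonneg_left ((hG _ (hTm ha) _ (hTm hb)).trans
      (mul_le_mul_of_nonneg_left (hT a ha b hb) hτ0)) ht0.le
    linarith
  have hdp : (0 : ℝ) < d := by linarith
  -- tracking
  have htrack : ∀ n, c ≤ n → ‖u n - V (lam n)‖ ≤ δ / 3 := by
    intro n hn
    set P := φ₂ ((1 - τ) ^ 2 * δ / (6 * (d : ℝ))) with hP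
    have hlogpos : 0 < Real.log (6 * (d : ℝ) / δ) := by
      apply Real.log_pos; rw [one_lt_div hδ0]; linarith
    have hlog : (d : ℝ) / (δ / 6) = 6 * d / δ := by field_simp
    have hcs := hφ₁ ((P + Real.log (6 * (d : ℝ) / δ)) / (1 - τ)) (by positivity)
    have := aux_track d hdp τ hτ0 hτ1 lam hlam (fun n => ‖u n - V (lam n)‖)
      (fun n => norm_nonneg _) (fun n => hbd _ (huC n) _ (hvC n)) P (δ / 6) (by positivity)
      (by linarith) ?_ c (by rw [hlog]; exact hcs) n hn
    · linarith
    intro m hm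
    have hl := hlam (m + 1)
    set l := lam (m + 1) with hl'
    have hq := hφ₂ ((1 - τ) ^ 2 * δ / (6 * (d : ℝ))) (by positivity) m hm
    have hl2 : 0 < l ^ 2 := pow_pos hl.1 2
    rw [← hl', div_le_iff₀ hl2] at hq
    have h1 : ‖u (m + 1) - V l‖ ≤ (1 - l * (1 - τ)) * ‖u m - V l‖ := by
      have := hcon l hl.1 hl.2 (u m) (huC m) (V l) (hvC (m+1))
      rw [← hve (m+1), ← hrec m] at this
      exact this
    have h2 : l * (1 - τ) * ‖V (lam m) - V l‖ ≤ |lam m - l| * d := by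
      have h3 := hcon l hl.1 hl.2 (V (lam m)) (hvC m) (V l) (hvC (m+1))
      rw [← hve (m+1)] at h3
      have e2 : V (lam m) - V l = (((1 - l) • T (V (lam m)) + l • G (T (V (lam m)))) - V l) +
          (lam m - l) • (G (T (V (lam m))) - T (V (lam m))) := by
        conv_lhs => rw [hve m]
        module
      have h4 : ‖V (lam m) - V l‖ ≤ (1 - l * (1 - τ)) * ‖V (lam m) - V l‖ + |lam m - l| * d := by
        calc ‖V (lam m) - V l‖ = _ := congrArg norm e2
          _ ≤ _ := norm_add_le _ _
          _ ≤ _ := by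
            refine add_le_add h3 ?_
            rw [norm_smul, Real.norm_eq_abs]
            exact mul_le_mul_of_nonneg_left (hbd _ (hGm (hTm (hvC m))) _ (hTm (hvC m))) (abs_nonneg _)
      linarith
    have h5 : ‖V (lam m) - V l‖ ≤ l * (1 - τ) * (δ / 6) := by
      have h6 : l * (1 - τ) * ‖V (lam m) - V l‖ ≤ l * (1 - τ) * (l * (1 - τ) * (δ / 6)) := by
        calc _ ≤ |lam m - l| * d := h2
          _ ≤ ((1 - τ) ^ 2 * δ / (6 * (d : ℝ)) * l ^ 2) * d := by gcongr
          _ = _ := by field_simp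
      exact le_of_mul_le_mul_left h6 (mul_pos hl.1 hτ)
    have h7 : ‖u m - V l‖ ≤ ‖u m - V (lam m)‖ + ‖V (lam m) - V l‖ := norm_sub_le_norm_sub_add_norm_sub _ _ _
    have h8 : 0 ≤ 1 - l * (1 - τ) := by nlinarith [hl.1, hl.2]
    have h9 : 0 ≤ l * (1 - τ) := mul_nonneg hl.1.le hτ.le
    have h10 := mul_le_mul_of_nonneg_left h7 h8
    have h11 := norm_nonneg (V (lam m) - V l)
    show ‖u (m + 1) - V l‖ ≤ (1 - l * (1 - τ)) * ‖u m - V (lam m)‖ + l * (1 - τ) * (δ / 6)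
    nlinarith
  -- the chain
  set f := fXi (δ / 6) τ gc χ h d with hf
  set εt := (1 - τ) ^ 2 / (6 + 8 * (d : ℝ)) *
    (((1 - τ) * (δ / 6 / 2) ^ 2 / 2) ^ 2 / (2 * (d : ℝ) ^ 2)) with hεt
  obtain ⟨hεt0, hεt1, hεt2⟩ := aux_num d hd τ hτ0 hτ1 ε (δ / 6) εt hε0 hε1 (by positivity)
    (by linarith) hεt
  obtain ⟨hN2, hNq⟩ := aux_num2 d hd τ hτ1 ε εt hτ0 hε0 hε1 hεt0 hεt1
  set N := ⌈8 * (d : ℝ) ^ 4 / εt ^ 4⌉₊ with hN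
  set i0 := sInf {i : ℕ | τ ^ (i + 1) ≤ εt / (6 * (d : ℝ) ^ 2)} with hi0
  have hi0m : τ ^ (i0 + 1) ≤ εt / (6 * (d : ℝ) ^ 2) := by
    have hne' : {i : ℕ | τ ^ (i + 1) ≤ εt / (6 * (d : ℝ) ^ 2)}.Nonempty := by
      obtain ⟨k, hk⟩ := exists_pow_lt_of_lt_one (show 0 < εt / (6 * (d : ℝ) ^ 2) by positivity) hτ1
      exact ⟨k, (pow_le_pow_of_le_one hτ0 hτ1.le (Nat.le_succ k)).trans hk.le⟩
    exact Nat.sInf_mem hne'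
  set K := KXi (δ / 6) gc χ h d τ with hK
  have hKk : K = kSeq d N f i0 := rfl
  set J := max i0 1 with hJ
  obtain ⟨hK1, hKJ⟩ := aux_kSeq d N hd f i0
  rw [← hKk] at hK1 hKJ
  have hτJ : τ ^ J * d ≤ ε / 8 := by
    have h1 : (τ ^ J) ^ 2 ≤ τ ^ (i0 + 1) := by
      rw [← pow_mul]; exact pow_le_pow_of_le_one hτ0 hτ1.le (by omega)
    have h2 : (τ ^ J * d) ^ 2 ≤ (ε / 8) ^ 2 := by
      have h3 := h1.trans hi0m
      rw [le_div_iff₀ (by positivity)] at h3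
      have : 0 ≤ (τ ^ J) ^ 2 * (d : ℝ) ^ 2 := by positivity
      rw [mul_pow]; nlinarith
    exact (abs_le_of_sq_le_sq' h2 (by positivity)).2
  set e : ℕ → ℕ := fun n => (ftilde d f)^[n] 1 with he
  have hemono : Monotone e := aux_iter_mono d hd f 1
  have he1 : ∀ n, 1 ≤ e n := fun n => hemono (Nat.zero_le n)
  have hes : ∀ n, e (n + 1) = ftilde d f (e n) := fun n => Function.iterate_succ_apply' _ _ _
  obtain ⟨s, hs1, hsJ, p, hp, hVp⟩ := aux_levels (d : ℝ) C hne hcl hcv hbd T hTm hT τ hτ0 hτ1 G hGm hG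
    V (fun t h1 h2 => (hV t h1 h2).1) (fun t h1 h2 => (hV t h1 h2).2) (fun n => (e n : ℝ))
    (fun a b hab => Nat.cast_le.2 (hemono hab)) (fun n => by exact_mod_cast he1 n)
    (N - 1) (by omega) (ε / 8) (by positivity) hNq J 1
  have hsN : s + 1 ≤ N ^ J := by
    have h1 : (N - 1) ^ J < N ^ J := Nat.pow_lt_pow_left (by omega) (by omega)
    rw [mul_one] at hsJ
    omega
  set k := e s with hk
  have hk1 : 1 ≤ k := he1 s
  have hkK' : ftilde d f k ≤ K := by rw [hk, ← hes]; exact (hemono hsN).trans hKJ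
  have hkK : k ≤ K := (aux_le_ftilde d hd f k).trans hkK'
  have hflow : ∀ n, 24 * (d : ℝ) * (fM0 h (fM0 (gTil gc) (χ (d * n)))) / ε ≤ f n := by
    intro n
    refine le_trans ?_ (Nat.le_ceil _)
    have hden : (1 - τ) * (δ / 6 / 2) ^ 2 ≤ ε / 4 := by nlinarith [sq_nonneg δ]
    have hdp2 : 0 < (1 - τ) * (δ / 6 / 2) ^ 2 := by positivity
    rw [div_le_div_iff₀ hε0 hdp2]
    have : (0 : ℝ) ≤ d * (fM0 h (fM0 (gTil gc) (χ (d * n)))) := by positivity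
    nlinarith
  have hhM : ∀ n, 1 ≤ fM0 h n := fun n => (hh n).trans (aux_fM0_le h n n le_rfl)
  have hkbig : 24 * (d : ℝ) / ε ≤ k := by
    have h1 : f 1 ≤ k := by
      have h2 : f 1 ≤ e 1 := aux_f_le_ftilde d hd f 1 le_rfl
      exact h2.trans (hemono hs1)
    have h2 : (f 1 : ℝ) ≤ k := by exact_mod_cast h1
    refine le_trans ?_ ((hflow 1).trans h2)
    have h3 : (1 : ℝ) ≤ fM0 h (fM0 (gTil gc) (χ (d * 1))) := by exact_mod_cast hhM _
    refine div_le_div_of_nonneg_right ?_ hε0.le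
    exact le_mul_of_one_le_right (by positivity) h3
  set m := min (χ (d * k)) (χ (d * K)) with hm
  have hlamup : ∀ i, m ≤ i → lam i ≤ 1 / ((d : ℝ) * k + 1) := by
    intro i hi
    rcases min_le_iff.1 hi with h1 | h1
    · have := hχ _ i h1
      push_cast at this; exact this
    · have := hχ _ i h1
      push_cast at this
      refine this.trans (one_div_le_one_div_of_le (by positivity) ?_)
      have : (k : ℝ) ≤ K := by exact_mod_cast hkK
      nlinarith
  have hkp : (0 : ℝ) < k := by exact_mod_cast hk1
  have hhf : ∀ i, i ≤ gc m → h i ≤ fM0 h (fM0 (gTil gc) (χ (d * k))) := by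
    intro i hi
    apply aux_fM0_le
    exact (hi.trans (le_max_right _ _)).trans (aux_fM0_le (gTil gc) _ m (min_le_left _ _))
  have hhk : ∀ i, i ≤ gc m → 24 * (d : ℝ) * h i / ε ≤ f k := by
    intro i hi
    refine le_trans ?_ (hflow k)
    have : (h i : ℝ) ≤ fM0 h (fM0 (gTil gc) (χ (d * k))) := by exact_mod_cast hhf i hi
    gcongr
  have hfk : (f k : ℝ) ≤ ftilde d f k := by exact_mod_cast aux_f_le_ftilde d hd f k hk1
  have hhp : ∀ i, (1 : ℝ) ≤ h i := fun i => by exact_mod_cast hh i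
  have hVi : ∀ i, m ≤ i → i ≤ gc m → ‖V (lam i) - p‖ ≤ ε / 4 := by
    intro i h1 h2
    have := hVp (lam i) ?_ ?_
    · linarith
    · refine le_trans ?_ (hlamh i)
      apply one_div_le_one_div_of_le (by linarith [hhp i])
      rw [hes]
      refine le_trans ?_ ((hhk i h2).trans hfk)
      rw [le_div_iff₀ hε0]
      have a1 : (h i : ℝ) * ε ≤ h i := mul_le_of_le_one_right (by linarith [hhp i]) hε1
      nlinarith [hhp i]
    · refine (hlamup i h1).trans (one_div_le_one_div_of_le hkp ?_)
      nlinarith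
  refine ⟨m + c, Nat.add_le_add_right (min_le_right _ _) c, ?_, ?_⟩
  · have hone : ∀ i ∈ Set.Icc (m + c) (m + c + g (m + c)), ‖u i - p‖ ≤ ε / 2 := by
      rintro i ⟨h1, h2⟩
      have a1 := htrack i (by omega)
      have a2 := hVi i (by omega) h2
      have a3 : ‖u i - p‖ ≤ ‖u i - V (lam i)‖ + ‖V (lam i) - p‖ := norm_sub_le_norm_sub_add_norm_sub _ _ _
      linarith
    intro i hi j hj
    have a1 := hone i hi
    have a2 := hone j hj
    have a3 : ‖u i - u j‖ ≤ ‖u i - p‖ + ‖p - u j‖ := norm_sub_le_norm_sub_add_norm_sub _ _ _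
    rw [norm_sub_rev p] at a3
    linarith
  · intro hTx
    set n := m + c with hn
    have hngc : n ≤ gc m := Nat.le_add_right _ _
    have hl := hlam n
    have hvn := hvC n
    have hTv := hTm hvn
    have hvip := aux_vip (d : ℝ) τ (lam n) hτ1 (V (lam n)) x (T (V (lam n))) (T x) (G (V (lam n)))
      (G (T (V (lam n)))) hl.1 (hve n) (hT _ hx _ hvn) hdp.le (hbd _ hx _ hvn)
      (hbd _ (hGm hTv) _ hTv)
      ((hG _ hvn _ hTv).trans (mul_le_of_le_one_left (norm_nonneg _) hτ1.le))
    have hdiff := aux_vip_diff (d : ℝ) τ (δ / 3) hτ0 (u n) (V (lam n)) x (G (u n)) (G (V (lam n)))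
      (htrack n (by omega)) (hG _ (huC n) _ hvn) hdp.le (hbd _ hx _ (huC n)) (hbd _ (hGm hvn) _ hvn)
    have b1 : (2 + τ) * (d : ℝ) * (δ / 3) ≤ ε / 6 := by rw [← hδε]; apply le_of_eq; ring
    have hKp : (0 : ℝ) < K := by exact_mod_cast hK1
    have hKbig : 24 * (d : ℝ) * h n / ε ≤ K := by
      refine ((hhk n hngc).trans hfk).trans ?_
      exact_mod_cast hkK'
    have hinv : 1 / lam n ≤ h n := by
      have := one_div_le_one_div_of_le (by have := hhp n; positivity) (hlamh n)
      simpa using this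
    have b2 : (d : ℝ) * ‖T x - x‖ / lam n ≤ ε / 24 := by
      calc (d : ℝ) * ‖T x - x‖ / lam n = d * ‖T x - x‖ * (1 / lam n) := by ring
        _ ≤ d * (1 / K) * h n := by
          have := hl.1
          gcongr
        _ = d * h n / K := by ring
        _ ≤ ε / 24 := by
          rw [div_le_iff₀ hε0] at hKbig
          rw [div_le_iff₀ hKp]; linarith
    have b3 : 2 * lam n * d * d ≤ ε / 12 := by
      have h1 := hlamup n (by omega)
      rw [le_div_iff₀ (by positivity)] at h1
      rw [div_le_iff₀ hε0] at hkbig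
      have h2 : lam n * d * k ≤ 1 := by nlinarith [hl.1]
      have h3 : lam n * d * (24 * d) ≤ lam n * d * (k * ε) :=
        mul_le_mul_of_nonneg_left hkbig (mul_nonneg hl.1.le hdp.le)
      nlinarith
    linarith
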